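/- Let H be a real Hilbert space, n ≥ 2, and let u = (u₁,…,uₙ) : [0, T) → H^n be a solution of the ODE system du_i/dt = Σ_{j≠i} (u_j − u_i)/‖u_j − u_i‖ whose coordinates are pairwise distinct at every time in [0, T). Then for every pair i ≠ j and all 0 ≤ s ≤ t < T, ‖u_i(t) − u_j(t)‖ ≤ ‖u_i(s) − u_j(s)‖ − 2(t − s). -/

import Mathlib

/-!
Fix two points `x ≠ y` of the configuration and let `e` be the unit vector from `y` to `x`, so that
`d/dt ‖x - y‖ = ⟪e, x' - y'⟫`. The attraction between `x` and `y` contributes `-2` to this. A third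
point `z` contributes `⟪e, a / ‖a‖ - b / ‖b‖⟫` with `a = z - x` and `b = z - y`, which is
nonpositive because `e` is a positive multiple of `b - a` and `a ↦ a / ‖a‖`, the gradient of a
convex function, is monotone.
-/

open NormedSpace (normalize)
open scoped RealInnerProductSpace

section Normalize

variable {E : Type*} [NormedAddCommGroup E] [InnerProductSpace ℝ E]

lemma real_inner_normalize_self (x : E) : ⟪x, normalize x⟫ = ‖x‖ := by
  rw [NormedSpace.normalize, real_inner_smul_right, real_inner_self_eq_norm_mul_norm, ← mul_assoc,
    inv_mul_mul_self]

lemma real_inner_normalize_le_norm (x y : E) : ⟪x, normalize y⟫ ≤ ‖x‖ := by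
  have norm_normalize_le_one : ‖normalize y‖ ≤ 1 := by
    rw [NormedSpace.normalize, norm_smul, norm_inv, norm_norm]
    exact inv_mul_le_one
  exact (real_inner_le_norm x _).trans
    (mul_le_of_le_one_right (norm_nonneg x) norm_normalize_le_one)

lemma real_inner_sub_normalize_sub_normalize_nonneg (x y : E) :
    0 ≤ ⟪x - y, normalize x - normalize y⟫ := by
  simp only [inner_sub_left, inner_sub_right, real_inner_normalize_self]
  linarith [real_inner_normalize_le_norm x y, real_inner_normalize_le_norm y x]

lemma real_inner_normalize_sub_normalize_sub_normalize_nonneg (x y : E) :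
    0 ≤ ⟪normalize (x - y), normalize x - normalize y⟫ := by
  rw [NormedSpace.normalize, real_inner_smul_left]
  exact mul_nonneg (by positivity) (real_inner_sub_normalize_sub_normalize_nonneg x y)

lemma hasDerivWithinAt_norm {f : ℝ → E} {f' : E} {s : Set ℝ} {t : ℝ}
    (hf : HasDerivWithinAt f f' s t) (hne : f t ≠ 0) :
    HasDerivWithinAt (fun x => ‖f x‖) ⟪normalize (f t), f'⟫ s t := by
  have hsqrt := hf.norm_sq.sqrt (pow_ne_zero 2 (norm_ne_zero_iff.mpr hne))
  simp only [Real.sqrt_sq (norm_nonneg _)] at hsqrt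
  convert hsqrt using 1
  rw [NormedSpace.normalize, real_inner_smul_left, mul_div_mul_left _ _ two_ne_zero, inv_mul_eq_div]

end Normalize

section Attraction

variable {E ι : Type*} [NormedAddCommGroup E] [InnerProductSpace ℝ E] [Fintype ι] [DecidableEq ι]

/-- The velocity of the `i`-th point of the configuration `v` when every other point attracts it
with unit force: `-∇ᵢ` of the sum of all pairwise distances. Since `normalize 0 = 0`, points
coinciding with `v i` contribute nothing. -/
noncomputable def attraction (v : ι → E) (i : ι) : E :=
  ∑ j ∈ Finset.univ.erase i, normalize (v j - v i)

lemma attraction_eq_add_sum_erase_erase (v : ι → E) {i j : ι} (hij : i ≠ j) :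
    attraction v i =
      normalize (v j - v i) + ∑ k ∈ (Finset.univ.erase i).erase j, normalize (v k - v i) :=
  (Finset.add_sum_erase _ _ (by simp [hij.symm])).symm

lemma real_inner_normalize_attraction_sub_attraction_le (v : ι → E) {i j : ι}
    (hne : v i ≠ v j) :
    ⟪normalize (v i - v j), attraction v i - attraction v j⟫ ≤ -2 := by
  have hij : i ≠ j := ne_of_apply_ne v hne
  set e := normalize (v i - v j) with he
  have inner_e_self : ⟪e, e⟫ = 1 := by
    rw [real_inner_self_eq_norm_sq, NormedSpace.norm_normalize (sub_ne_zero.mpr hne), one_pow]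
  have third_point (k : ι) : ⟪e, normalize (v k - v i) - normalize (v k - v j)⟫ ≤ 0 := by
    have := real_inner_normalize_sub_normalize_sub_normalize_nonneg (v k - v j) (v k - v i)
    rwa [sub_sub_sub_cancel_left, ← neg_sub (normalize (v k - v i)), inner_neg_right,
      neg_nonneg] at this
  have attraction_sub : attraction v i - attraction v j = -(2 : ℝ) • e +
      ∑ k ∈ (Finset.univ.erase i).erase j, (normalize (v k - v i) - normalize (v k - v j)) := by
    rw [attraction_eq_add_sum_erase_erase v hij, attraction_eq_add_sum_erase_erase v hij.symm,
      Finset.erase_right_comm (a := j), Finset.sum_sub_distrib, ← neg_sub (v i) (v j),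
      NormedSpace.normalize_neg, ← he]
    module
  rw [attraction_sub, inner_add_right, real_inner_smul_right, inner_e_self, inner_sum]
  linarith [Finset.sum_nonpos fun k (_ : k ∈ (Finset.univ.erase i).erase j) => third_point k]

theorem pairwise_distance_decreases_along_flow_general {S : Set ℝ} (hS : Convex ℝ S)
    {u : ℝ → ι → E} (hinj : ∀ t ∈ S, Function.Injective (u t))
    (hode : ∀ t ∈ S, ∀ i, HasDerivWithinAt (fun s => u s i) (attraction (u t) i) S t)
    {i j : ι} (hij : i ≠ j) {s t : ℝ} (hs : s ∈ S) (ht : t ∈ S) (hst : s ≤ t) :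
    ‖u t i - u t j‖ ≤ ‖u s i - u s j‖ - 2 * (t - s) := by
  have hne (x : ℝ) (hx : x ∈ S) : u x i ≠ u x j := (hinj x hx).ne hij
  have hderiv (x : ℝ) (hx : x ∈ S) : HasDerivWithinAt (fun x => ‖u x i - u x j‖)
      ⟪normalize (u x i - u x j), attraction (u x) i - attraction (u x) j⟫ S x :=
    hasDerivWithinAt_norm ((hode x hx i).sub (hode x hx j)) (sub_ne_zero.mpr (hne x hx))
  have hderiv_interior (x : ℝ) (hx : x ∈ interior S) :=
    (hderiv x (interior_subset hx)).hasDerivAt (mem_interior_iff_mem_nhds.mp hx)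
  have mean_value : ‖u t i - u t j‖ - ‖u s i - u s j‖ ≤ -2 * (t - s) := by
    refine hS.image_sub_le_mul_sub_of_deriv_le (fun x hx => (hderiv x hx).continuousWithinAt)
      (fun x hx => (hderiv_interior x hx).differentiableAt.differentiableWithinAt)
      (fun x hx => ?_) s hs t ht hst
    rw [(hderiv_interior x hx).deriv]
    exact real_inner_normalize_attraction_sub_attraction_le _ (hne x (interior_subset hx))
  linarith

end Attraction

/-- Along a solution `u : [0, T) → H^n` of the gradient flow system
`du_i/dt = ∑_{j ≠ i} (u_j − u_i)/‖u_j − u_i‖` with pairwise distinct coordinates,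
each pairwise distance decreases at rate at least `2`:
`‖u_i(t) − u_j(t)‖ ≤ ‖u_i(s) − u_j(s)‖ − 2(t − s)` for `0 ≤ s ≤ t < T` and `i ≠ j`. -/
theorem pairwise_distance_decreases_along_flow
    {H : Type*} [NormedAddCommGroup H] [InnerProductSpace ℝ H] [CompleteSpace H]
    (n : ℕ) (hn : 2 ≤ n) (T : ℝ) (u : ℝ → Fin n → H)
    (hdistinct : ∀ t ∈ Set.Ico (0 : ℝ) T, ∀ i j : Fin n, i ≠ j → u t i ≠ u t j)
    (hode : ∀ t ∈ Set.Ico (0 : ℝ) T, ∀ i : Fin n,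
      HasDerivWithinAt (fun s => u s i)
        (∑ j ∈ Finset.univ.erase i, (‖u t j - u t i‖)⁻¹ • (u t j - u t i))
        (Set.Ico (0 : ℝ) T) t) :
    ∀ i j : Fin n, i ≠ j → ∀ s t : ℝ, 0 ≤ s → s ≤ t → t < T →
      ‖u t i - u t j‖ ≤ ‖u s i - u s j‖ - 2 * (t - s) := by
  intro i j hij s t hs hst ht
  exact pairwise_distance_decreases_along_flow_general (convex_Ico 0 T)
    (fun x hx _ _ => not_imp_not.mp (hdistinct x hx _ _)) hode hij
    ⟨hs, hst.trans_lt ht⟩ ⟨hs.trans hst, ht⟩ hst
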